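/- Let A and B be the companion matrices of f(x) = (x-1)^6 and g(x) = (x+1)^4(x^2+x+1) respectively, regarded as elements of GL(6,ℤ). Then the elements t = A⁻¹B and r = A⁻¹BA both have infinite order, the subgroup of GL(6,ℤ) generated by A and B equals the subgroup generated by t and r, and this group is the internal free product of the cyclic subgroups ⟨t⟩ and ⟨r⟩; in particular, the hypergeometric group Γ(α,β) with α = (0,0,0,0,0,0) and β = (1/2,1/2,1/2,1/2,1/3,2/3) is isomorphic to ℤ * ℤ, a free group of rank 2. -/

import Mathlib

open Matrix

/-- The companion matrix of `f(x) = (x-1)^6 = x^6 - 6x^5 + 15x^4 - 20x^3 + 15x^2 - 6x + 1`. -/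
def companionF : Matrix (Fin 6) (Fin 6) ℤ :=
  !![0,0,0,0,0,-1; 1,0,0,0,0,6; 0,1,0,0,0,-15; 0,0,1,0,0,20; 0,0,0,1,0,-15; 0,0,0,0,1,6]

/-- The companion matrix of `g(x) = (x+1)^4(x^2+x+1) = x^6 + 5x^5 + 11x^4 + 14x^3 + 11x^2 + 5x + 1`. -/
def companionG : Matrix (Fin 6) (Fin 6) ℤ :=
  !![0,0,0,0,0,-1; 1,0,0,0,0,-5; 0,1,0,0,0,-11; 0,0,1,0,0,-14; 0,0,0,1,0,-11; 0,0,0,0,1,-5]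

/-!
In suitable coordinates `t` is a transvection along the functional `x ↦ x 0` and `J = r * t⁻¹` is a
unipotent Jordan block, and some involution `u` conjugates both `t` and `r` to their inverses.
Ping-pong is played with a double cone `C = K ∪ -K`, the set `Y = C ∪ u • C` and the union of the
translates `t ^ n • Y` with `n ≠ 0`. The involution turns negative powers of `r` into positive ones,
so it suffices that `r • C ⊆ C` and that `r * t ^ n` maps `Y` into `C` for `n ≠ 0`. As `t ^ n • x`
is affine in `n`, with direction mapped into `-K` by `J`, only the smallest positive and negative
`n` matter, which leaves four inclusions, linear over `ℤ`, for one polyhedral cone `K`. The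
translates of `Y` are disjoint from `Y` because the ratio `x 5 / x 0` lies strictly between `0` and
`48` on `Y`, while `t ^ n` decreases it by `48 * n`.
-/

open scoped Pointwise

namespace HypergeometricGroup

section FreeGroup

variable {ι G : Type*} [Group G]

/-- Unlike `FreeGroup.injective_lift_of_ping_pong`, this asks nothing about the points outside the
sets `X i`. -/
theorem freeGroup_lift_injective_of_zpow_smul_subset [Nontrivial ι] {α : Type*} [MulAction G α]
    (a : ι → G) (X : ι → Set α) (hX : ∀ i, (X i).Nonempty)
    (hdisj : Pairwise (Function.onFun Disjoint X))
    (hpp : Pairwise fun i j ↦ ∀ n : ℤ, n ≠ 0 → a i ^ n • X j ⊆ X i) :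
    Function.Injective (FreeGroup.lift a) := by
  let f (i : ι) : FreeGroup Unit →* G := FreeGroup.lift fun _ ↦ a i
  have lift_eq : FreeGroup.lift a =
      (Monoid.CoprodI.lift f).comp (freeGroupEquivCoprodI (ι := ι)).toMonoidHom := by
    ext i
    simp [f]
  have hf : Pairwise fun i j ↦ ∀ h : FreeGroup Unit, h ≠ 1 → f i h • X j ⊆ X i := by
    intro i j hij
    refine FreeGroup.freeGroupUnitEquivInt.forall_congr_left.mpr fun n hn ↦ ?_
    have hfn : f i (FreeGroup.freeGroupUnitEquivInt.symm n) = a i ^ n := by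
      simp [f, FreeGroup.freeGroupUnitEquivInt]
    rw [hfn]
    exact hpp hij n fun h0 ↦ hn (by simp [h0, FreeGroup.freeGroupUnitEquivInt])
  have hcard : 3 ≤ Cardinal.mk (FreeGroup Unit) := by
    rw [FreeGroup.freeGroupUnitEquivInt.cardinal_eq, Cardinal.mk_denumerable]
    exact Cardinal.natCast_le_aleph0
  rw [lift_eq, MonoidHom.coe_comp]
  exact (Monoid.CoprodI.lift_injective_of_ping_pong f (.inr ⟨Classical.arbitrary ι, hcard⟩) X
    hX hdisj hf).comp freeGroupEquivCoprodI.injective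

theorem freeGroup_lift_map_injective {H : Type*} [Group H] {f : G →* H}
    (hf : Function.Injective f) {a : ι → G} (ha : Function.Injective (FreeGroup.lift a)) :
    Function.Injective (FreeGroup.lift fun i ↦ f (a i)) := by
  have lift_eq : FreeGroup.lift (fun i ↦ f (a i)) = f.comp (FreeGroup.lift a) := by
    ext i
    simp
  rw [lift_eq]
  exact hf.comp ha

theorem not_isOfFinOrder_of_freeGroup_lift_injective {a : ι → G}
    (ha : Function.Injective (FreeGroup.lift a)) (i : ι) : ¬ IsOfFinOrder (a i) := by
  rw [← FreeGroup.lift_apply_of (f := a), ha.isOfFinOrder_iff]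
  exact not_isOfFinOrder_of_isMulTorsionFree (FreeGroup.of_ne_one i)

/-- The isomorphism expressing that a free family is a basis of the subgroup it generates. -/
noncomputable def closureRangeEquivFreeGroup {a : ι → G}
    (ha : Function.Injective (FreeGroup.lift a)) :
    Subgroup.closure (Set.range a) ≃* FreeGroup ι :=
  (MulEquiv.subgroupCongr FreeGroup.range_lift_eq_closure.symm).trans
    (MonoidHom.ofInjective ha).symm

variable {t r : G}

theorem range_coprod_lift_zpowers :
    (Monoid.Coprod.lift (Subgroup.zpowers t).subtype (Subgroup.zpowers r).subtype).range =
      Subgroup.closure {t, r} := by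
  rw [Monoid.Coprod.range_lift, Subgroup.range_subtype, Subgroup.range_subtype,
    Subgroup.zpowers_eq_closure, Subgroup.zpowers_eq_closure, ← Subgroup.closure_union,
    Set.singleton_union]

theorem coprod_lift_zpowers_injective (h : Function.Injective (FreeGroup.lift ![t, r])) :
    Function.Injective
      (Monoid.Coprod.lift (Subgroup.zpowers t).subtype (Subgroup.zpowers r).subtype) := by
  let t' : Subgroup.zpowers t := ⟨t, Subgroup.mem_zpowers t⟩
  let r' : Subgroup.zpowers r := ⟨r, Subgroup.mem_zpowers r⟩
  let a : Fin 2 → Monoid.Coprod (Subgroup.zpowers t) (Subgroup.zpowers r) :=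
    ![.inl t', .inr r']
  have lift_eq : (Monoid.Coprod.lift (Subgroup.zpowers t).subtype
      (Subgroup.zpowers r).subtype).comp (FreeGroup.lift a) = FreeGroup.lift ![t, r] := by
    ext i
    fin_cases i <;> simp [a, t', r']
  have inl_le : (Monoid.Coprod.inl : Subgroup.zpowers t →*
      Monoid.Coprod _ (Subgroup.zpowers r)).range ≤ (FreeGroup.lift a).range := by
    rintro _ ⟨⟨_, n, rfl⟩, rfl⟩
    refine ⟨.of 0 ^ n, ?_⟩
    rw [map_zpow, FreeGroup.lift_apply_of]
    exact (MonoidHom.map_zpow _ t' n).symm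
  have inr_le : (Monoid.Coprod.inr : Subgroup.zpowers r →*
      Monoid.Coprod (Subgroup.zpowers t) _).range ≤ (FreeGroup.lift a).range := by
    rintro _ ⟨⟨_, n, rfl⟩, rfl⟩
    refine ⟨.of 1 ^ n, ?_⟩
    rw [map_zpow, FreeGroup.lift_apply_of]
    exact (MonoidHom.map_zpow _ r' n).symm
  have surjective : Function.Surjective (FreeGroup.lift a) := by
    rw [← MonoidHom.range_eq_top, eq_top_iff, ← Monoid.Coprod.range_inl_sup_range_inr]
    exact sup_le inl_le inr_le
  refine Function.Injective.of_comp_right ?_ surjective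
  rwa [← MonoidHom.coe_comp, lift_eq]

theorem closure_pair_eq_closure_inv_mul_pair (a b : G) :
    Subgroup.closure {a, b} = Subgroup.closure {a⁻¹ * b, a⁻¹ * b * a} := by
  apply le_antisymm <;> rw [Subgroup.closure_le, Set.pair_subset_iff, SetLike.mem_coe,
    SetLike.mem_coe]
  · have ht : a⁻¹ * b ∈ Subgroup.closure {a⁻¹ * b, a⁻¹ * b * a} :=
      Subgroup.subset_closure (.inl rfl)
    have hr : a⁻¹ * b * a ∈ Subgroup.closure {a⁻¹ * b, a⁻¹ * b * a} :=
      Subgroup.subset_closure (.inr rfl)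
    have ha : a ∈ Subgroup.closure {a⁻¹ * b, a⁻¹ * b * a} := (mul_mem_cancel_left ht).mp hr
    exact ⟨ha, (mul_mem_cancel_left (inv_mem ha)).mp ht⟩
  · have ha : a ∈ Subgroup.closure {a, b} := Subgroup.subset_closure (.inl rfl)
    have hb : b ∈ Subgroup.closure {a, b} := Subgroup.subset_closure (.inr rfl)
    exact ⟨mul_mem (inv_mem ha) hb, mul_mem (mul_mem (inv_mem ha) hb) ha⟩

end FreeGroup

section MirroredPingPong

variable {G α : Type*} [Group G] [MulAction G α] {t r u : G} {C : Set α}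

theorem smul_union_smul_self (hu : u * u = 1) : u • (C ∪ u • C) = C ∪ u • C := by
  rw [Set.smul_set_union, smul_smul, hu, one_smul, Set.union_comm]

theorem pow_mul_zpow_smul_subset (hr : r • C ⊆ C)
    (hrt : ∀ n : ℤ, n ≠ 0 → (r * t ^ n) • (C ∪ u • C) ⊆ C) (m : ℕ) {n : ℤ} (hn : n ≠ 0) :
    (r ^ (m + 1) * t ^ n) • (C ∪ u • C) ⊆ C := by
  induction m with
  | zero => simpa using hrt n hn
  | succ m ih =>
    rw [pow_succ', mul_assoc, mul_smul]
    exact (Set.smul_set_mono ih).trans hr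

theorem zpow_mul_zpow_smul_subset (hu : u * u = 1) (hut : SemiconjBy u t t⁻¹)
    (hur : SemiconjBy u r r⁻¹) (hr : r • C ⊆ C)
    (hrt : ∀ n : ℤ, n ≠ 0 → (r * t ^ n) • (C ∪ u • C) ⊆ C) {m n : ℤ} (hm : m ≠ 0) (hn : n ≠ 0) :
    (r ^ m * t ^ n) • (C ∪ u • C) ⊆ C ∪ u • C := by
  obtain ⟨k, hk⟩ := Nat.exists_eq_succ_of_ne_zero (Int.natAbs_ne_zero.mpr hm)
  rcases Int.natAbs_eq m with hmk | hmk <;> rw [hmk, hk]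
  · rw [zpow_natCast]
    exact (pow_mul_zpow_smul_subset hr hrt k hn).trans Set.subset_union_left
  · have hconj : u * (r ^ (k + 1) * t ^ (-n)) = r ^ (-((k + 1 : ℕ) : ℤ)) * t ^ n * u := by
      have h := (hur.zpow_right ((k + 1 : ℕ) : ℤ)).mul_right (hut.zpow_right (-n))
      rwa [_root_.inv_zpow', _root_.inv_zpow', neg_neg, zpow_natCast] at h
    nth_rw 1 [← smul_union_smul_self hu]
    rw [← mul_smul, ← hconj, mul_smul]
    exact (Set.smul_set_mono (pow_mul_zpow_smul_subset hr hrt k (neg_ne_zero.mpr hn))).trans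
      Set.subset_union_right

theorem freeGroup_lift_injective_of_mirror (hu : u * u = 1) (hut : SemiconjBy u t t⁻¹)
    (hur : SemiconjBy u r r⁻¹) (hC : C.Nonempty) (hr : r • C ⊆ C)
    (hrt : ∀ n : ℤ, n ≠ 0 → (r * t ^ n) • (C ∪ u • C) ⊆ C)
    (hdisj : ∀ n : ℤ, n ≠ 0 → Disjoint (t ^ n • (C ∪ u • C)) (C ∪ u • C)) :
    Function.Injective (FreeGroup.lift ![t, r]) := by
  set Y : Set α := C ∪ u • C
  have hY : Y.Nonempty := hC.inl
  let X : Set α := ⋃ n : {n : ℤ // n ≠ 0}, t ^ n.1 • Y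
  have hX : X.Nonempty := Set.nonempty_iUnion.mpr ⟨⟨1, one_ne_zero⟩, hY.smul_set⟩
  have hXY : Disjoint X Y := Set.disjoint_iUnion_left.mpr fun n ↦ hdisj n n.2
  have htY (n : ℤ) (hn : n ≠ 0) : t ^ n • Y ⊆ X :=
    Set.subset_iUnion (fun n : {n : ℤ // n ≠ 0} ↦ t ^ n.1 • Y) ⟨n, hn⟩
  have hrX (m : ℤ) (hm : m ≠ 0) : r ^ m • X ⊆ Y := by
    rw [Set.smul_set_iUnion, Set.iUnion_subset_iff]
    intro n
    rw [smul_smul]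
    exact zpow_mul_zpow_smul_subset hu hut hur hr hrt hm n.2
  refine freeGroup_lift_injective_of_zpow_smul_subset _ ![X, Y] ?_ ?_ ?_
  · exact Fin.forall_fin_two.mpr ⟨hX, hY⟩
  · intro i j hij
    fin_cases i <;> fin_cases j <;> first | exact absurd rfl hij | exact hXY | exact hXY.symm
  · intro i j hij
    fin_cases i <;> fin_cases j <;> first | exact absurd rfl hij | exact htY | exact hrX

end MirroredPingPong

theorem add_smul_mem_of_nonneg {R M : Type*} [Semiring R] [PartialOrder R] [AddCommMonoid M]
    [Module R M] {K : ConvexCone R M} {x y : M} (hx : x ∈ K) (hy : y ∈ K) {c : R} (hc : 0 ≤ c) :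
    x + c • y ∈ K := by
  rcases hc.eq_or_lt with rfl | hc
  · rwa [zero_smul, add_zero]
  · exact K.add_mem hx (K.smul_mem hc hy)

section Cone

variable {R ι : Type*} [CommSemiring R] [PartialOrder R] [IsStrictOrderedRing R] [Fintype ι]

/-- The open polyhedral cone of the vectors on which all functionals in a given list, encoded by
their coefficients, are positive. -/
def positiveCone (F : List (ι → R)) : ConvexCone R (ι → R) where
  carrier := {x | ∀ f ∈ F, 0 < f ⬝ᵥ x}
  smul_mem' c hc x hx f hf := by
    rw [dotProduct_smul]
    exact smul_pos hc (hx f hf)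
  add_mem' x hx y hy f hf := by
    rw [dotProduct_add]
    exact add_pos (hx f hf) (hy f hf)

theorem mem_positiveCone {F : List (ι → R)} {x : ι → R} :
    x ∈ positiveCone F ↔ ∀ f ∈ F, 0 < f ⬝ᵥ x :=
  Iff.rfl

end Cone

theorem zpow_smul_eq_add_smul {R G M : Type*} [CommRing R] [Group G] [AddCommGroup M] [Module R M]
    [MulAction G M] {g : G} {φ : M → R} {v : M} (hg : ∀ x, g • x = x + φ x • v)
    (hφ : ∀ x, φ (g • x) = φ x) (n : ℤ) (x : M) : g ^ n • x = x + ((n : R) * φ x) • v := by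
  have hinv (y : M) : g⁻¹ • y = y - φ y • v := by
    rw [eq_sub_iff_add_eq, ← smul_inv_smul g y, hφ, inv_smul_smul, ← hg]
  induction n generalizing x with
  | zero => simp
  | succ n ih =>
    rw [_root_.zpow_add_one, mul_smul, ih, hφ, hg]
    push_cast
    module
  | pred n ih =>
    have hφinv : φ (g⁻¹ • x) = φ x := by rw [← hφ, smul_inv_smul]
    rw [_root_.zpow_sub_one, mul_smul, ih, hφinv, hinv]
    push_cast
    module

/-- The generator `t = A⁻¹ * B`, in the coordinates given by `coordChange`. -/
def transvection : GL (Fin 6) ℤ where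
  val := !![1, 0, 0, 0, 0, 0; -11, 1, 0, 0, 0, 0; -40, 0, 1, 0, 0, 0; -88, 0, 0, 1, 0, 0;
    -96, 0, 0, 0, 1, 0; -48, 0, 0, 0, 0, 1]
  inv := !![1, 0, 0, 0, 0, 0; 11, 1, 0, 0, 0, 0; 40, 0, 1, 0, 0, 0; 88, 0, 0, 1, 0, 0;
    96, 0, 0, 0, 1, 0; 48, 0, 0, 0, 0, 1]
  val_inv := by decide
  inv_val := by decide

/-- The element `r * t⁻¹`, where `t = A⁻¹ * B` and `r = A⁻¹ * B * A`, in the coordinates given by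
`coordChange`. It is conjugate to `A`, because `r * t⁻¹ = t * A * t⁻¹`. -/
def jordanBlock : GL (Fin 6) ℤ where
  val := !![1, 1, 0, 0, 0, 0; 0, 1, 1, 0, 0, 0; 0, 0, 1, 1, 0, 0; 0, 0, 0, 1, 1, 0;
    0, 0, 0, 0, 1, 1; 0, 0, 0, 0, 0, 1]
  inv := !![1, -1, 1, -1, 1, -1; 0, 1, -1, 1, -1, 1; 0, 0, 1, -1, 1, -1; 0, 0, 0, 1, -1, 1;
    0, 0, 0, 0, 1, -1; 0, 0, 0, 0, 0, 1]
  val_inv := by decide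
  inv_val := by decide

/-- An involution that conjugates both free generators to their inverses. -/
def mirror : GL (Fin 6) ℤ where
  val := !![1, 0, 0, 0, 0, 0; 11, -1, 1, -1, 1, -1; 40, 0, 1, -2, 3, -4; 88, 0, 0, -1, 3, -6;
    96, 0, 0, 0, 1, -4; 48, 0, 0, 0, 0, -1]
  inv := !![1, 0, 0, 0, 0, 0; 11, -1, 1, -1, 1, -1; 40, 0, 1, -2, 3, -4; 88, 0, 0, -1, 3, -6;
    96, 0, 0, 0, 1, -4; 48, 0, 0, 0, 0, -1]
  val_inv := by decide
  inv_val := by decide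

/-- The coordinates for ping-pong. The `i`-th row is the functional `φ ∘ (r * t⁻¹ - 1) ^ i`, where
`φ x = -x 5` is the functional along which `t = A⁻¹ * B` is a transvection. -/
def coordChange : GL (Fin 6) ℤ where
  val := !![0, 0, 0, 0, 0, -1; 0, 0, 0, 0, -1, -16; 0, 0, 0, -1, -4, -50; 0, 0, -1, -3, -6, -98;
    0, -1, -2, -3, -4, -101; -1, -1, -1, -1, -1, -49]
  inv := !![12, -1, 1, -1, 1, -1; -9, 4, -3, 2, -1, 0; 44, -6, 3, -1, 0, 0; -14, 4, -1, 0, 0, 0;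
    16, -1, 0, 0, 0, 0; -1, 0, 0, 0, 0, 0]
  val_inv := by decide
  inv_val := by decide

theorem mirror_mul_self : mirror * mirror = 1 := Units.ext (by decide)

theorem semiconjBy_mirror_transvection : SemiconjBy mirror transvection transvection⁻¹ :=
  Units.ext (by decide)

theorem semiconjBy_mirror_jordanBlock_mul_transvection :
    SemiconjBy mirror (jordanBlock * transvection) (jordanBlock * transvection)⁻¹ :=
  Units.ext (by decide)

/-- The direction in which `transvection` moves all vectors. -/
def axis : Fin 6 → ℤ := ![0, -11, -40, -88, -96, -48]

theorem transvection_smul (x : Fin 6 → ℤ) : transvection • x = x + x 0 • axis := by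
  rw [Units.smul_def, smul_eq_mulVec]
  ext i
  fin_cases i <;> simp [transvection, axis, mulVec, dotProduct, Fin.sum_univ_six] <;> ring

theorem transvection_zpow_smul (n : ℤ) (x : Fin 6 → ℤ) :
    transvection ^ n • x = x + (n * x 0) • axis := by
  refine zpow_smul_eq_add_smul (φ := fun x ↦ x 0) transvection_smul (fun x ↦ ?_) n x
  simp [transvection_smul, axis]

/-- The coefficients of the functionals that cut out the ping-pong cone. They arise from functionals
that are positive on the orbit to be enclosed, such as the last coordinates, by repeatedly taking
pullbacks along the four maps under which the cone has to be stable and decreasing the coefficients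
of each pullback as long as it stays positive on that orbit. -/
def facets : List (Fin 6 → ℤ) :=
  [![0, 0, 0, 0, 0, 1],
   ![0, 0, 0, 0, 1, 0],
   ![0, 0, 0, 1, 0, 0],
   ![0, 0, 1, 0, 0, 0],
   ![0, 1, 0, 0, 0, 0],
   ![1, 3, 4, 1, -1, -1],
   ![1, 5, 10, 6, -2, -5],
   ![1, 6, 16, 18, 4, -8],
   ![2, 5, 3, -1, -1, -1],
   ![6, 9, 0, -1, 0, -1],
   ![20, 12, -5, 2, -1, 0],
   ![32, -16, 8, -4, 2, -1],
   ![38, 26, -9, 2, -1, 0],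
   ![59, 3, -5, 6, -8, 8],
   ![64, 22, -16, 10, -7, 4],
   ![69, 14, -13, 11, -10, 7],
   ![74, -4, 5, -8, 9, -10],
   ![78, -2, 4, -7, 9, -12],
   ![80, -32, 12, -4, 1, 0],
   ![283, -7, -8, -2, 2, 2],
   ![287, -15, -9, 1, 1, 1],
   ![1329, -272, 24, 8, -2, -2],
   ![1465, -276, 15, 10, 0, -4],
   ![4142, -1189, 261, -25, -10, 4],
   ![8341, -2953, 928, -236, 35, 6],
   ![13495, -5388, 2025, -692, 201, -41]]

theorem jordanBlock_smul (x : Fin 6 → ℤ) :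
    jordanBlock • x = ![x 0 + x 1, x 1 + x 2, x 2 + x 3, x 3 + x 4, x 4 + x 5, x 5] := by
  rw [Units.smul_def, smul_eq_mulVec]
  ext i
  fin_cases i <;> simp [jordanBlock, mulVec, dotProduct, Fin.sum_univ_six]

theorem mirror_smul (x : Fin 6 → ℤ) :
    mirror • x = ![x 0, 11 * x 0 - x 1 + x 2 - x 3 + x 4 - x 5,
      40 * x 0 + x 2 - 2 * x 3 + 3 * x 4 - 4 * x 5, 88 * x 0 - x 3 + 3 * x 4 - 6 * x 5,
      96 * x 0 + x 4 - 4 * x 5, 48 * x 0 - x 5] := by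
  rw [Units.smul_def, smul_eq_mulVec]
  ext i
  fin_cases i <;> simp [mirror, mulVec, dotProduct, Fin.sum_univ_six] <;> ring

/-- The cone on which ping-pong is played; its points have positive coordinate `x 0`. -/
noncomputable def pingPongCone : ConvexCone ℤ (Fin 6 → ℤ) := positiveCone facets

theorem mem_pingPongCone {x : Fin 6 → ℤ} : x ∈ pingPongCone ↔ ∀ f ∈ facets,
    0 < f 0 * x 0 + f 1 * x 1 + f 2 * x 2 + f 3 * x 3 + f 4 * x 4 + f 5 * x 5 := by
  simp only [pingPongCone, mem_positiveCone, dotProduct, Fin.sum_univ_six]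

theorem neg_jordanBlock_smul_axis_mem : -(jordanBlock • axis) ∈ pingPongCone := by
  rw [jordanBlock_smul, mem_pingPongCone]
  simp [facets, axis]

theorem jordanBlock_smul_mem {x : Fin 6 → ℤ} (hx : x ∈ pingPongCone) :
    jordanBlock • x ∈ pingPongCone := by
  rw [jordanBlock_smul]
  rw [mem_pingPongCone] at hx ⊢
  simp only [facets, List.forall_mem_cons, List.not_mem_nil, false_imp_iff,
    implies_true, and_true, cons_val] at hx ⊢
  casesm* _ ∧ _
  and_intros <;> linarith

theorem neg_jordanBlock_smul_transvection_smul_mem {x : Fin 6 → ℤ}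
    (hx : x ∈ pingPongCone) :
    -(jordanBlock • transvection • x) ∈ pingPongCone := by
  rw [jordanBlock_smul, transvection_smul]
  rw [mem_pingPongCone] at hx ⊢
  simp only [facets, axis, Pi.add_apply, Pi.smul_apply, smul_eq_mul, Pi.neg_apply,
    List.forall_mem_cons, List.not_mem_nil, false_imp_iff,
    implies_true, and_true, cons_val] at hx ⊢
  casesm* _ ∧ _
  and_intros <;> linarith

theorem jordanBlock_smul_mirror_smul_mem {x : Fin 6 → ℤ} (hx : x ∈ pingPongCone) :
    jordanBlock • mirror • x ∈ pingPongCone := by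
  rw [jordanBlock_smul, mirror_smul]
  rw [mem_pingPongCone] at hx ⊢
  simp only [facets, List.forall_mem_cons, List.not_mem_nil, false_imp_iff,
    implies_true, and_true, cons_val] at hx ⊢
  casesm* _ ∧ _
  and_intros <;> linarith

theorem neg_jordanBlock_smul_transvection_sq_smul_mirror_smul_mem {x : Fin 6 → ℤ}
    (hx : x ∈ pingPongCone) :
    -(jordanBlock • transvection ^ (2 : ℤ) • mirror • x) ∈ pingPongCone := by
  rw [jordanBlock_smul, transvection_zpow_smul, mirror_smul]
  rw [mem_pingPongCone] at hx ⊢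
  simp only [facets, axis, Pi.add_apply, Pi.smul_apply, smul_eq_mul, Pi.neg_apply,
    List.forall_mem_cons, List.not_mem_nil, false_imp_iff,
    implies_true, and_true, cons_val] at hx ⊢
  casesm* _ ∧ _
  and_intros <;> linarith

theorem coord_bounds_of_mem_pingPongCone {x : Fin 6 → ℤ} (hx : x ∈ pingPongCone) :
    0 < x 5 ∧ x 5 < 48 * x 0 := by
  rw [mem_pingPongCone] at hx
  simp only [facets, List.forall_mem_cons, List.not_mem_nil, false_imp_iff, implies_true,
    and_true, cons_val] at hx
  casesm* _ ∧ _
  and_intros <;> linarith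

theorem jordanBlock_smul_transvection_zpow_smul (k m : ℤ) (x : Fin 6 → ℤ) :
    jordanBlock • transvection ^ k • x =
      jordanBlock • transvection ^ m • x + ((m - k) * x 0) • -(jordanBlock • axis) := by
  simp only [transvection_zpow_smul, smul_add, smul_comm jordanBlock (_ : ℤ)]
  generalize jordanBlock • x = y, jordanBlock • axis = w
  module

section Powers

variable {x : Fin 6 → ℤ} {k m : ℤ}

theorem jordanBlock_smul_zpow_smul_mem_of_le (hx : 0 < x 0) (hkm : k ≤ m)
    (h : jordanBlock • transvection ^ m • x ∈ pingPongCone) :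
    jordanBlock • transvection ^ k • x ∈ pingPongCone := by
  rw [jordanBlock_smul_transvection_zpow_smul k m]
  exact add_smul_mem_of_nonneg h neg_jordanBlock_smul_axis_mem
    (mul_nonneg (sub_nonneg.mpr hkm) hx.le)

theorem neg_jordanBlock_smul_zpow_smul_mem_of_le (hx : 0 < x 0) (hmk : m ≤ k)
    (h : -(jordanBlock • transvection ^ m • x) ∈ pingPongCone) :
    -(jordanBlock • transvection ^ k • x) ∈ pingPongCone := by
  rw [jordanBlock_smul_transvection_zpow_smul k m, neg_add, ← neg_smul, ← neg_mul, neg_sub]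
  exact add_smul_mem_of_nonneg h neg_jordanBlock_smul_axis_mem
    (mul_nonneg (sub_nonneg.mpr hmk) hx.le)

end Powers

/-- The ping-pong cone together with its negative, since `r` maps the cone into its negative. -/
def doubleCone : Set (Fin 6 → ℤ) := pingPongCone ∪ -pingPongCone

theorem neg_mem_doubleCone {x : Fin 6 → ℤ} : -x ∈ doubleCone ↔ x ∈ doubleCone := by
  simp [doubleCone, or_comm]

theorem smul_doubleCone_subset {g : GL (Fin 6) ℤ} (hg : ∀ x ∈ pingPongCone, g • x ∈ doubleCone) :
    g • doubleCone ⊆ doubleCone := by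
  rw [Set.smul_set_subset_iff]
  rintro x (hx | hx)
  · exact hg x hx
  · have hgx := hg (-x) hx
    rw [smul_neg] at hgx
    exact neg_mem_doubleCone.mp hgx

theorem jordanBlock_smul_zpow_smul_mem_doubleCone (k : ℤ) {x : Fin 6 → ℤ}
    (hx : x ∈ pingPongCone) : jordanBlock • transvection ^ k • x ∈ doubleCone := by
  have hx0 : 0 < x 0 := by linarith [coord_bounds_of_mem_pingPongCone hx]
  rcases le_or_gt k 0 with hk | hk
  · refine .inl (jordanBlock_smul_zpow_smul_mem_of_le hx0 hk ?_)
    simpa using jordanBlock_smul_mem hx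
  · refine .inr (neg_jordanBlock_smul_zpow_smul_mem_of_le hx0 hk ?_)
    simpa using neg_jordanBlock_smul_transvection_smul_mem hx

theorem jordanBlock_smul_zpow_smul_mirror_smul_mem_doubleCone {k : ℤ} (hk : k ≠ 1)
    {x : Fin 6 → ℤ} (hx : x ∈ pingPongCone) :
    jordanBlock • transvection ^ k • mirror • x ∈ doubleCone := by
  have hx0 : 0 < (mirror • x) 0 := by
    rw [mirror_smul, cons_val_zero]
    linarith [coord_bounds_of_mem_pingPongCone hx]
  rcases hk.lt_or_gt with hk | hk
  · refine .inl (jordanBlock_smul_zpow_smul_mem_of_le hx0 (Int.le_sub_one_of_lt hk) ?_)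
    simpa using jordanBlock_smul_mirror_smul_mem hx
  · exact .inr (neg_jordanBlock_smul_zpow_smul_mem_of_le hx0 hk
      (neg_jordanBlock_smul_transvection_sq_smul_mirror_smul_mem hx))

theorem mul_zpow_smul_doubleCone_subset (n : ℤ) :
    (jordanBlock * transvection * transvection ^ n) • doubleCone ⊆ doubleCone := by
  refine smul_doubleCone_subset fun x hx ↦ ?_
  rw [mul_assoc, ← _root_.zpow_one_add, mul_smul]
  exact jordanBlock_smul_zpow_smul_mem_doubleCone (1 + n) hx

theorem mul_zpow_smul_mirror_smul_doubleCone_subset {n : ℤ} (hn : n ≠ 0) :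
    (jordanBlock * transvection * transvection ^ n) • mirror • doubleCone ⊆ doubleCone := by
  rw [smul_smul]
  refine smul_doubleCone_subset fun x hx ↦ ?_
  rw [mul_assoc jordanBlock, ← _root_.zpow_one_add, mul_smul, mul_smul]
  exact jordanBlock_smul_zpow_smul_mirror_smul_mem_doubleCone (by simpa using hn) hx

theorem mul_mem_Ioo_of_mem_doubleCone {x : Fin 6 → ℤ} (hx : x ∈ doubleCone) :
    x 0 * x 5 ∈ Set.Ioo 0 (48 * x 0 ^ 2) := by
  have of_mem {y : Fin 6 → ℤ} (hy : y ∈ pingPongCone) :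
      y 0 * y 5 ∈ Set.Ioo 0 (48 * y 0 ^ 2) := by
    obtain ⟨h5, h50⟩ := coord_bounds_of_mem_pingPongCone hy
    constructor <;> nlinarith
  rcases hx with hx | hx
  · exact of_mem hx
  · simpa using of_mem hx

theorem mul_mem_Ioo_of_mem_union {x : Fin 6 → ℤ} (hx : x ∈ doubleCone ∪ mirror • doubleCone) :
    x 0 * x 5 ∈ Set.Ioo 0 (48 * x 0 ^ 2) := by
  rcases hx with hx | hx
  · exact mul_mem_Ioo_of_mem_doubleCone hx
  · obtain ⟨y, hy, rfl⟩ := Set.mem_smul_set.mp hx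
    obtain ⟨hpos, hlt⟩ := mul_mem_Ioo_of_mem_doubleCone hy
    simp only [mirror_smul, cons_val]
    constructor <;> linarith

theorem disjoint_zpow_smul_union {n : ℤ} (hn : n ≠ 0) :
    Disjoint (transvection ^ n • (doubleCone ∪ mirror • doubleCone))
      (doubleCone ∪ mirror • doubleCone) := by
  rw [Set.disjoint_left]
  intro y hy hnx
  obtain ⟨x, hx, rfl⟩ := Set.mem_smul_set.mp hy
  obtain ⟨hpos, hlt⟩ := mul_mem_Ioo_of_mem_union hx
  obtain ⟨hnpos, hnlt⟩ := mul_mem_Ioo_of_mem_union hnx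
  have zero_coord : (transvection ^ n • x) 0 = x 0 := by
    simp [transvection_zpow_smul, axis]
  have five_coord : (transvection ^ n • x) 5 = x 5 - 48 * n * x 0 := by
    simp only [transvection_zpow_smul, axis, Pi.add_apply, Pi.smul_apply, smul_eq_mul, cons_val]
    ring
  rw [zero_coord, five_coord] at hnpos hnlt
  rcases hn.lt_or_gt with hn | hn <;> nlinarith [sq_nonneg (x 0)]

theorem doubleCone_nonempty : doubleCone.Nonempty :=
  ⟨_, .inl neg_jordanBlock_smul_axis_mem⟩

theorem freeGroup_lift_transvection_injective :
    Function.Injective (FreeGroup.lift ![transvection, jordanBlock * transvection]) := by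
  refine freeGroup_lift_injective_of_mirror mirror_mul_self semiconjBy_mirror_transvection
    semiconjBy_mirror_jordanBlock_mul_transvection doubleCone_nonempty ?_ (fun n hn ↦ ?_)
    fun _ ↦ disjoint_zpow_smul_union
  · simpa using mul_zpow_smul_doubleCone_subset 0
  · rw [Set.smul_set_union, Set.union_subset_iff]
    exact ⟨mul_zpow_smul_doubleCone_subset n, mul_zpow_smul_mirror_smul_doubleCone_subset hn⟩

section Companion

variable {A B : GL (Fin 6) ℤ}

theorem inv_mul_eq_conj (hA : (A : Matrix (Fin 6) (Fin 6) ℤ) = companionF)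
    (hB : (B : Matrix (Fin 6) (Fin 6) ℤ) = companionG) :
    A⁻¹ * B = MulAut.conj coordChange⁻¹ transvection := by
  rw [inv_mul_eq_iff_eq_mul, MulAut.conj_apply, inv_inv]
  ext1
  rw [hB, Units.val_mul, hA]
  decide

theorem inv_mul_mul_eq_conj (hA : (A : Matrix (Fin 6) (Fin 6) ℤ) = companionF)
    (hB : (B : Matrix (Fin 6) (Fin 6) ℤ) = companionG) :
    A⁻¹ * B * A = MulAut.conj coordChange⁻¹ (jordanBlock * transvection) := by
  rw [inv_mul_eq_conj hA hB, MulAut.conj_apply, MulAut.conj_apply]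
  ext1
  rw [Units.val_mul _ A, hA]
  decide

theorem freeGroup_lift_companion_injective
    (hA : (A : Matrix (Fin 6) (Fin 6) ℤ) = companionF)
    (hB : (B : Matrix (Fin 6) (Fin 6) ℤ) = companionG) :
    Function.Injective (FreeGroup.lift ![A⁻¹ * B, A⁻¹ * B * A]) := by
  have conj_eq : ![A⁻¹ * B, A⁻¹ * B * A] = fun i ↦ (MulAut.conj coordChange⁻¹).toMonoidHom
      (![transvection, jordanBlock * transvection] i) :=
    funext (Fin.forall_fin_two.mpr ⟨inv_mul_eq_conj hA hB, inv_mul_mul_eq_conj hA hB⟩)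
  rw [conj_eq]
  exact freeGroup_lift_map_injective (MulAut.conj coordChange⁻¹).injective
    freeGroup_lift_transvection_injective

end Companion

end HypergeometricGroup

/-- The hypergeometric group with `α = (0,0,0,0,0,0)`, `β = (1/2,1/2,1/2,1/2,1/3,2/3)` is
free of rank two: `t = A⁻¹B` and `r = A⁻¹BA` have infinite order, generate the group
generated by `A` and `B`, and the group is the internal free product of `⟨t⟩` and `⟨r⟩`;
in particular it is isomorphic to `ℤ * ℤ`, the free group of rank `2`. -/
theorem hypergeometric_free_of_rank_two
    (A B : GL (Fin 6) ℤ)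
    (hA : (A : Matrix (Fin 6) (Fin 6) ℤ) = companionF)
    (hB : (B : Matrix (Fin 6) (Fin 6) ℤ) = companionG) :
    ¬ IsOfFinOrder (A⁻¹ * B) ∧ ¬ IsOfFinOrder (A⁻¹ * B * A) ∧
    Subgroup.closure {A, B} = Subgroup.closure {A⁻¹ * B, A⁻¹ * B * A} ∧
    Function.Injective
      (Monoid.Coprod.lift (Subgroup.zpowers (A⁻¹ * B)).subtype
        (Subgroup.zpowers (A⁻¹ * B * A)).subtype) ∧
    (Monoid.Coprod.lift (Subgroup.zpowers (A⁻¹ * B)).subtype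
        (Subgroup.zpowers (A⁻¹ * B * A)).subtype).range = Subgroup.closure {A, B} ∧
    Nonempty ((Subgroup.closure {A, B} : Subgroup (GL (Fin 6) ℤ)) ≃* FreeGroup (Fin 2)) := by
  have free := HypergeometricGroup.freeGroup_lift_companion_injective hA hB
  have closure_eq := HypergeometricGroup.closure_pair_eq_closure_inv_mul_pair A B
  have infinite := HypergeometricGroup.not_isOfFinOrder_of_freeGroup_lift_injective free
  refine ⟨infinite 0, infinite 1, closure_eq,
    HypergeometricGroup.coprod_lift_zpowers_injective free, ?_, ?_⟩
  · rw [closure_eq, HypergeometricGroup.range_coprod_lift_zpowers]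
  · have range_eq : Set.range ![A⁻¹ * B, A⁻¹ * B * A] = {A⁻¹ * B, A⁻¹ * B * A} := by
      simp [Set.pair_comm]
    rw [closure_eq, ← range_eq]
    exact ⟨HypergeometricGroup.closureRangeEquivFreeGroup free⟩
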